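/- arXiv:2305.09173 — 2 statements merged into one kernel-verified Lean document; each statement's English description precedes it below -/
import Mathlib

section
/- For the network ẋ = -Lx over a directed graph G = (V,E), a subset S ⊆ V is a topological cluster if and only if S is a maximal set satisfying: (C1) the induced subgraph G[S] has at least one directed spanning tree, and (C2) either no node of S, or exactly one node of S which is a root of G[S], has incoming edges from V \ S. -/
open Filter Topology

/-- `S` converges to a common value for every choice of positive edge weights
and every solution of `ẋᵢ = Σⱼ aᵢⱼ (xⱼ - xᵢ)`. -/
def ConvergesTogether {V : Type*} [Fintype V] (E : V → V → Prop) (S : Set V) : Prop :=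
  ∀ A : Matrix V V ℝ,
    (∀ i j, E j i → 0 < A i j) → (∀ i j, ¬ E j i → A i j = 0) →
    ∀ x : ℝ → V → ℝ,
      (∀ (i : V) (t : ℝ),
        HasDerivAt (fun s => x s i) (∑ j, A i j * (x t j - x t i)) t) →
      ∃ c : ℝ, ∀ i ∈ S, Tendsto (fun t => x t i) atTop (𝓝 c)

/-- Conditions (C1) and (C2): the induced subgraph `G[S]` has a directed spanning
tree (a root reaching all of `S` within `S`), and either no node of `S`, or
exactly one node of `S` which is a root of `G[S]`, has incoming edges from
outside `S`. -/
def SatC1C2 {V : Type*} (E : V → V → Prop) (S : Set V) : Prop :=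
  (∃ r ∈ S, ∀ j ∈ S,
    Relation.ReflTransGen (fun a b => a ∈ S ∧ b ∈ S ∧ E a b) r j) ∧
  ((∀ i ∈ S, ∀ j ∉ S, ¬ E j i) ∨
    ∃ r ∈ S,
      (∀ j ∈ S, Relation.ReflTransGen (fun a b => a ∈ S ∧ b ∈ S ∧ E a b) r j) ∧
      (∃ j ∉ S, E j r) ∧
      ∀ i ∈ S, (∃ j ∉ S, E j i) → i = r)

/-!
The weighted Laplacian of a digraph is `c (1 - P)` with `P` row-stochastic, a contraction for the
sup norm. On the range of `P - 1` the operator `exp (P - 1)` has norm less than one: a norming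
functional at a vector whose norm it preserved would be constant along the powers of `P`, and so
would vanish on the range. Hence every trajectory converges to an equilibrium.

The equilibria, taken over all choices of weights, are the balanced vectors: at each node, the
in-neighbours all agree with it or lie on both sides of it. By the maximum principle a balanced
vector is constant on a set satisfying (C1) and (C2). Conversely, take a balanced vector `x` whose
level sets are as fine as possible, and keep only the edges entering nodes where `x` is flat. Two
nodes with no common ancestor along these edges are separated by some vector balanced for them, and
adding a small multiple of it to `x` gives a finer balanced vector. So any two nodes of a level set
of `x` have such a common ancestor, and the level set satisfies (C1) and (C2).
-/

section Contraction

open NormedSpace (exp)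
open scoped Nat

variable {E F : Type*} [NormedAddCommGroup E] [NormedSpace ℝ E]
  [NormedAddCommGroup F] [NormedSpace ℝ F] {P : E →L[ℝ] E}

theorem norm_pow_apply_le_of_opNorm_le_one (hP : ‖P‖ ≤ 1) (n : ℕ) (v : E) : ‖(P ^ n) v‖ ≤ ‖v‖ := by
  induction n with
  | zero => simp
  | succ n ih =>
    rw [pow_succ', mul_apply_eq_comp]
    exact (P.le_of_opNorm_le hP _).trans (by simpa using ih)

-- The sum of the first `n` values telescopes to `g (Pⁿ w - w)`, which is bounded in `n`.
theorem eq_zero_of_forall_dual_pow_apply_eq (hP : ‖P‖ ≤ 1) {w : E} {g : StrongDual ℝ E} {ρ : ℝ}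
    (h : ∀ n : ℕ, g ((P ^ n) (P w - w)) = ρ) : ρ = 0 := by
  have hsum (n : ℕ) : n * ρ = g ((P ^ n) w - w) := by
    have := Finset.sum_range_sub (fun k => g ((P ^ k) w)) n
    simp_rw [← map_sub, pow_succ, mul_apply_eq_comp, ← map_sub, h] at this
    simpa using this
  have hbound (n : ℕ) : n * |ρ| ≤ ‖g‖ * (‖w‖ + ‖w‖) := calc
    n * |ρ| = ‖g ((P ^ n) w - w)‖ := by rw [← hsum, Real.norm_eq_abs, abs_mul, Nat.abs_cast]
    _ ≤ ‖g‖ * ‖(P ^ n) w - w‖ := g.le_opNorm _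
    _ ≤ ‖g‖ * (‖w‖ + ‖w‖) := by
      gcongr
      exact (norm_sub_le _ _).trans (by gcongr; exact norm_pow_apply_le_of_opNorm_le_one hP n w)
  by_contra hρ
  obtain ⟨n, hn⟩ := exists_nat_gt (‖g‖ * (‖w‖ + ‖w‖) / |ρ|)
  exact (hbound n).not_gt ((div_lt_iff₀ (abs_pos.2 hρ)).1 hn)

theorem norm_lt_one_of_forall_norm_apply_lt [FiniteDimensional ℝ E] {T : E →L[ℝ] F}
    (h : ∀ v ≠ 0, ‖T v‖ < ‖v‖) : ‖T‖ < 1 := by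
  have : ProperSpace E := FiniteDimensional.proper_real E
  rcases subsingleton_or_nontrivial E with _ | _
  · simp [Subsingleton.elim T 0]
  obtain ⟨u, hu, hmax⟩ := (isCompact_sphere (0 : E) 1).exists_isMaxOn
    (NormedSpace.sphere_nonempty.2 zero_le_one) T.continuous.norm.continuousOn
  have hu1 : ‖u‖ = 1 := by simpa using hu
  calc ‖T‖ ≤ ‖T u‖ := T.opNorm_le_of_unit_norm (norm_nonneg _) fun v hv => hmax (by simpa using hv)
    _ < 1 := hu1 ▸ h u (norm_ne_zero_iff.1 (by simp [hu1]))

section Complete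

variable [CompleteSpace E]

theorem hasSum_exp_apply (T : E →L[ℝ] E) (v : E) :
    HasSum (fun n : ℕ => (n ! : ℝ)⁻¹ • (T ^ n) v) (exp T v) :=
  (NormedSpace.exp_series_hasSum_exp' (𝕂 := ℝ) T).mapL (ContinuousLinearMap.apply ℝ E v)

theorem hasSum_real_exp (t : ℝ) : HasSum (fun n : ℕ => (n ! : ℝ)⁻¹ * t ^ n) (Real.exp t) := by
  simpa [Real.exp_eq_exp_ℝ] using NormedSpace.exp_series_hasSum_exp' (𝕂 := ℝ) t

theorem exp_smul_sub_one_apply (T : E →L[ℝ] E) (t : ℝ) (v : E) :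
    exp (t • (T - 1)) v = Real.exp (-t) • exp (t • T) v := by
  let _ : NormedAlgebra ℚ (E →L[ℝ] E) := .restrictScalars ℚ ℝ _
  have hscalar : exp (algebraMap ℝ (E →L[ℝ] E) (-t)) = Real.exp (-t) • 1 := by
    rw [← NormedSpace.algebraMap_exp_comm, ← Real.exp_eq_exp_ℝ, Algebra.algebraMap_eq_smul_one]
  have hsplit : t • (T - 1) = algebraMap ℝ (E →L[ℝ] E) (-t) + t • T := by
    rw [Algebra.algebraMap_eq_smul_one]
    module
  rw [hsplit, NormedSpace.exp_add_of_commute (Algebra.commutes _ _), hscalar]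
  simp

theorem norm_exp_smul_sub_one_apply_le (hP : ‖P‖ ≤ 1) {t : ℝ} (ht : 0 ≤ t) (v : E) :
    ‖exp (t • (P - 1)) v‖ ≤ ‖v‖ := by
  have hexp : ‖exp (t • P) v‖ ≤ Real.exp t * ‖v‖ := by
    refine (hasSum_exp_apply (t • P) v).norm_le_of_bounded
      ((hasSum_real_exp t).mul_right ‖v‖) fun n => ?_
    rw [smul_pow, smul_apply, smul_smul, norm_smul,
      Real.norm_of_nonneg (by positivity)]
    gcongr
    exact norm_pow_apply_le_of_opNorm_le_one hP n v
  rw [exp_smul_sub_one_apply, norm_smul, Real.norm_of_nonneg (Real.exp_pos _).le]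
  calc Real.exp (-t) * ‖exp (t • P) v‖ ≤ Real.exp (-t) * (Real.exp t * ‖v‖) := by gcongr
    _ = ‖v‖ := by rw [← mul_assoc, ← Real.exp_add, neg_add_cancel, Real.exp_zero, one_mul]

-- `exp (P - 1) v` is a weighted mean of the vectors `Pⁿ v`, on each of which `g` is at most `‖v‖`.
theorem dual_pow_apply_eq_norm (hP : ‖P‖ ≤ 1) {g : StrongDual ℝ E} (hg : ‖g‖ ≤ 1) {v : E}
    (h : g (exp (P - 1) v) = ‖v‖) (n : ℕ) : g ((P ^ n) v) = ‖v‖ := by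
  have hle (k : ℕ) : g ((P ^ k) v) ≤ ‖v‖ := calc
    g ((P ^ k) v) ≤ ‖g ((P ^ k) v)‖ := Real.le_norm_self _
    _ ≤ ‖(P ^ k) v‖ := by simpa using g.le_of_opNorm_le hg ((P ^ k) v)
    _ ≤ ‖v‖ := norm_pow_apply_le_of_opNorm_le_one hP k v
  have hexp : g (exp P v) = Real.exp 1 * ‖v‖ := by
    have := exp_smul_sub_one_apply P 1 v
    simp only [one_smul] at this
    rw [← h, this, map_smul, smul_eq_mul, ← mul_assoc, ← Real.exp_add, add_neg_cancel,
      Real.exp_zero, one_mul]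
  have hdefect : HasSum (fun k : ℕ => (k ! : ℝ)⁻¹ * (‖v‖ - g ((P ^ k) v))) 0 := by
    simpa [hexp, mul_sub] using
      ((hasSum_real_exp 1).mul_right ‖v‖).sub ((hasSum_exp_apply P v).mapL g)
  have hzero := congrFun ((hasSum_zero_iff_of_nonneg fun k =>
    mul_nonneg (by positivity) (sub_nonneg.2 (hle k))).1 hdefect) n
  have hfact : (n ! : ℝ)⁻¹ ≠ 0 := by positivity
  exact (sub_eq_zero.1 ((mul_eq_zero.1 hzero).resolve_left hfact)).symm

theorem norm_exp_sub_one_apply_lt (hP : ‖P‖ ≤ 1) {w : E} (hw : P w - w ≠ 0) :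
    ‖exp (P - 1) (P w - w)‖ < ‖P w - w‖ := by
  have hle : ‖exp (P - 1) (P w - w)‖ ≤ ‖P w - w‖ := by
    simpa using norm_exp_smul_sub_one_apply_le hP zero_le_one (P w - w)
  refine hle.lt_of_ne fun heq => hw ?_
  obtain ⟨g, hg, hgv⟩ := exists_dual_vector'' ℝ (exp (P - 1) (P w - w))
  exact norm_eq_zero.1 <| eq_zero_of_forall_dual_pow_apply_eq hP
    (dual_pow_apply_eq_norm hP hg (hgv.trans heq))

theorem eq_exp_smul_apply_of_hasDerivAt {B : E →L[ℝ] E} {f : ℝ → E}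
    (hf : ∀ t, HasDerivAt f (B (f t)) t) : f = fun t => exp (t • B) (f 0) := by
  refine ODE_solution_unique_univ (v := fun _ => B) (s := fun _ => Set.univ) (t₀ := 0)
    (fun _ => B.lipschitz.lipschitzOnWith) (fun t => ⟨hf t, trivial⟩)
    (fun t => ⟨?_, trivial⟩) (by simp)
  exact ((hasDerivAt_exp_smul_const' B t).clm_apply (hasDerivAt_const t (f 0))).congr_deriv
    (by simp)

end Complete

variable [FiniteDimensional ℝ E]

theorem tendsto_exp_pow_apply_sub (hP : ‖P‖ ≤ 1) (w : E) :
    Tendsto (fun n : ℕ => (exp (P - 1) ^ n) (P w - w)) atTop (𝓝 0) := by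
  have : CompleteSpace E := FiniteDimensional.complete ℝ E
  let R : Submodule ℝ E := LinearMap.range (P - 1 : E →L[ℝ] E).toLinearMap
  have hcomm (n : ℕ) : Commute (exp (P - 1) ^ n) (P - 1) := ((Commute.refl _).exp_left).pow_left n
  have hmem (n : ℕ) : (exp (P - 1) ^ n) (P w - w) ∈ R :=
    ⟨(exp (P - 1) ^ n) w, (DFunLike.congr_fun (hcomm n).eq w).symm⟩
  set r := ‖(exp (P - 1)).comp R.subtypeL‖
  have hr0 : 0 ≤ r := norm_nonneg ((exp (P - 1)).comp R.subtypeL)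
  have hr1 : r < 1 := norm_lt_one_of_forall_norm_apply_lt fun ⟨_, u, hu⟩ hne => by
    subst hu
    exact norm_exp_sub_one_apply_lt hP fun h => hne (Subtype.ext h)
  have hgeom (n : ℕ) : ‖(exp (P - 1) ^ n) (P w - w)‖ ≤ r ^ n * ‖P w - w‖ := by
    induction n with
    | zero => simp
    | succ n ih =>
      rw [pow_succ', mul_apply_eq_comp, pow_succ', mul_assoc]
      exact (((exp (P - 1)).comp R.subtypeL).le_opNorm ⟨_, hmem n⟩).trans
        (mul_le_mul_of_nonneg_left ih hr0)
  refine squeeze_zero_norm hgeom ?_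
  simpa using (tendsto_pow_atTop_nhds_zero_of_lt_one hr0 hr1).mul_const ‖P w - w‖

theorem tendsto_exp_smul_apply_sub (hP : ‖P‖ ≤ 1) (w : E) :
    Tendsto (fun t : ℝ => exp (t • (P - 1)) (P w - w)) atTop (𝓝 0) := by
  have : CompleteSpace E := FiniteDimensional.complete ℝ E
  let _ : NormedAlgebra ℚ (E →L[ℝ] E) := .restrictScalars ℚ ℝ _
  have hfloor := (tendsto_exp_pow_apply_sub hP w).norm.comp (tendsto_nat_floor_atTop (α := ℝ))
  rw [norm_zero] at hfloor
  refine squeeze_zero_norm' ?_ hfloor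
  filter_upwards [eventually_ge_atTop 0] with t ht
  have hsplit : t • (P - 1) = (t - ⌊t⌋₊) • (P - 1) + ⌊t⌋₊ • (P - 1) := by
    rw [← Nat.cast_smul_eq_nsmul ℝ]
    module
  rw [hsplit, NormedSpace.exp_add_of_commute
    (((Commute.refl _).smul_left _).smul_right _), NormedSpace.exp_nsmul]
  exact norm_exp_smul_sub_one_apply_le hP (sub_nonneg.2 (Nat.floor_le ht)) _

theorem isCompl_ker_range_sub_one (hP : ‖P‖ ≤ 1) :
    IsCompl (LinearMap.ker (P - 1).toLinearMap) (LinearMap.range (P - 1).toLinearMap) := by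
  rw [Submodule.isCompl_iff_disjoint _ _
    (by rw [add_comm, LinearMap.finrank_range_add_finrank_ker]), Submodule.disjoint_def]
  rintro _ hker ⟨w, rfl⟩
  have hfix : P (P w - w) = P w - w := sub_eq_zero.1 hker
  obtain ⟨g, -, hg⟩ := exists_dual_vector'' ℝ (P w - w)
  change P w - w = 0
  refine norm_eq_zero.1 (eq_zero_of_forall_dual_pow_apply_eq hP (w := w) (g := g) fun n => ?_)
  rw [FunLike.coe_pow_eq_iterate, Function.iterate_fixed hfix]
  exact hg

theorem exists_tendsto_of_hasDerivAt_smul_sub (hP : ‖P‖ ≤ 1) {c : ℝ} (hc : 0 < c) {f : ℝ → E}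
    (hf : ∀ t, HasDerivAt f (c • (P (f t) - f t)) t) :
    ∃ l, P l = l ∧ Tendsto f atTop (𝓝 l) := by
  have : CompleteSpace E := FiniteDimensional.complete ℝ E
  obtain ⟨l, hl, _, ⟨w, rfl⟩, hsum⟩ := Submodule.mem_sup.1
    ((isCompl_ker_range_sub_one hP).sup_eq_top ▸ Submodule.mem_top : f 0 ∈ _)
  have hfix : P l = l := sub_eq_zero.1 hl
  have hflow : (fun t => f t - l) = fun t => exp (t • c • (P - 1 : E →L[ℝ] E)) (f 0 - l) :=
    eq_exp_smul_apply_of_hasDerivAt (B := c • (P - 1)) fun t => by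
      refine ((hf t).sub_const l).congr_deriv ?_
      simp [hfix]
  have hstart : f 0 - l = P w - w := by simp [← hsum]
  have hlim : Tendsto (fun t => f t - l) atTop (𝓝 0) := by
    rw [hflow, hstart]
    simpa only [Function.comp_def, id, smul_smul] using
      (tendsto_exp_smul_apply_sub hP w).comp (tendsto_id.atTop_mul_const hc)
  exact ⟨l, hfix, by simpa using hlim.add_const l⟩

end Contraction

theorem exists_mem_Icc_eq_self {α : Type*} [ConditionallyCompleteLattice α] {f : α → α}
    (hf : Monotone f) {a b : α} (hab : a ≤ b) (ha : a ≤ f a) (hb : f b ≤ b) :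
    ∃ x ∈ Set.Icc a b, f x = x := by
  have : Fact (a ≤ b) := ⟨hab⟩
  let F : Set.Icc a b →o Set.Icc a b :=
    ⟨fun x => ⟨f x, ha.trans (hf x.2.1), (hf x.2.2).trans hb⟩, fun _ _ h => hf h⟩
  exact ⟨F.lfp, F.lfp.2, congrArg Subtype.val F.map_lfp⟩

section RowStochastic

open scoped Matrix

variable {V R : Type*} [Fintype V] [DecidableEq V]

section Order

variable [Semiring R] [PartialOrder R] [IsOrderedRing R] {M : Matrix V V R}

theorem monotone_mulVec_of_mem_rowStochastic (hM : M ∈ Matrix.rowStochastic R V) :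
    Monotone (M *ᵥ ·) := fun _ _ hxy _ =>
  Finset.sum_le_sum fun j _ =>
    mul_le_mul_of_nonneg_left (hxy j) (Matrix.nonneg_of_mem_rowStochastic hM)

theorem indicator_le_mulVec_indicator (hM : M ∈ Matrix.rowStochastic R V) {U : Set V}
    (hU : ∀ i ∈ U, ∀ j ∉ U, M i j = 0) : U.indicator (1 : V → R) ≤ M *ᵥ U.indicator 1 := by
  classical
  refine Set.indicator_le' (fun i hi => ?_) fun i _ =>
    Matrix.nonneg_mulVec_of_mem_rowStochastic hM (Set.indicator_nonneg fun _ _ => zero_le_one) i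
  calc (1 : R) = ∑ j, M i j := (Matrix.sum_row_of_mem_rowStochastic hM i).symm
    _ = ∑ j, M i j * U.indicator 1 j := Finset.sum_congr rfl fun j _ => by
      by_cases hj : j ∈ U
      · simp [hj]
      · simp [hj, hU i hi j hj]
    _ ≤ _ := le_rfl

end Order

variable {M : Matrix V V ℝ}

theorem exists_mulVec_eq_self (hM : M ∈ Matrix.rowStochastic ℝ V) {U W : Set V}
    (hUW : Disjoint U W) (hU : ∀ i ∈ U, ∀ j ∉ U, M i j = 0) (hW : ∀ i ∈ W, ∀ j ∉ W, M i j = 0) :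
    ∃ y, M *ᵥ y = y ∧ (∀ i ∈ U, y i = 1) ∧ ∀ i ∈ W, y i = 0 := by
  have hupper : M *ᵥ (1 - W.indicator 1) ≤ 1 - W.indicator 1 := by
    rw [Matrix.mulVec_sub, Matrix.one_vecMul_of_mem_rowStochastic hM]
    exact sub_le_sub_left (indicator_le_mulVec_indicator hM hW) 1
  have hle : U.indicator (1 : V → ℝ) ≤ 1 - W.indicator 1 := by
    rw [← Set.indicator_compl]
    exact Set.indicator_le_indicator_of_subset hUW.subset_compl_right fun _ => zero_le_one
  obtain ⟨y, ⟨hy, hy'⟩, hfix⟩ := exists_mem_Icc_eq_self (monotone_mulVec_of_mem_rowStochastic hM)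
    hle (indicator_le_mulVec_indicator hM hU) hupper
  refine ⟨y, hfix, fun i hi => le_antisymm ?_ ?_, fun i hi => le_antisymm ?_ ?_⟩
  · simpa [hUW.notMem_of_mem_left hi] using hy' i
  · simpa [hi] using hy i
  · simpa [hi] using hy' i
  · simpa [hUW.notMem_of_mem_right hi] using hy i

theorem norm_mulVecLin_le_one_of_mem_rowStochastic (hM : M ∈ Matrix.rowStochastic ℝ V) :
    ‖LinearMap.toContinuousLinearMap M.mulVecLin‖ ≤ 1 := by
  refine ContinuousLinearMap.opNorm_le_bound _ zero_le_one fun v => ?_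
  rw [one_mul, pi_norm_le_iff_of_nonneg (norm_nonneg v)]
  intro i
  calc ‖∑ j, M i j * v j‖ ≤ ∑ j, M i j * ‖v‖ := norm_sum_le_of_le _ fun j _ => by
        rw [norm_mul, Real.norm_of_nonneg (Matrix.nonneg_of_mem_rowStochastic hM)]
        exact mul_le_mul_of_nonneg_left (norm_le_pi_norm v j)
          (Matrix.nonneg_of_mem_rowStochastic hM)
    _ = ‖v‖ := by rw [← Finset.sum_mul, Matrix.sum_row_of_mem_rowStochastic hM, one_mul]

theorem exists_tendsto_of_hasDerivAt_smul_mulVec_sub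
    (hM : M ∈ Matrix.rowStochastic ℝ V) {c : ℝ} (hc : 0 < c) {x : ℝ → V → ℝ}
    (hx : ∀ t, HasDerivAt x (c • (M *ᵥ x t - x t)) t) :
    ∃ l, M *ᵥ l = l ∧ Tendsto x atTop (𝓝 l) :=
  exists_tendsto_of_hasDerivAt_smul_sub (P := LinearMap.toContinuousLinearMap M.mulVecLin)
    (norm_mulVecLin_le_one_of_mem_rowStochastic hM) hc hx

end RowStochastic

section Laplacian

open scoped Matrix

variable {V R : Type*} [Fintype V] [DecidableEq V]

/-- The Laplacian of the digraph in which `A i j` is the weight of the edge from `j` to `i`, so that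
the consensus dynamics with weights `A` read `ẋ = -Lx`. -/
def laplacian [Ring R] (A : Matrix V V R) : Matrix V V R :=
  Matrix.diagonal (fun i => ∑ j, A i j) - A

theorem neg_laplacian_mulVec_apply [CommRing R] (A : Matrix V V R) (x : V → R) (i : V) :
    (-(laplacian A *ᵥ x)) i = ∑ j, A i j * (x j - x i) := by
  simp only [laplacian, Matrix.sub_mulVec, Pi.neg_apply, Pi.sub_apply, Matrix.mulVec_diagonal,
    neg_sub, mul_sub, Finset.sum_sub_distrib, Finset.sum_mul]
  rfl

theorem laplacian_mulVec_eq_zero_iff [CommRing R] {A : Matrix V V R} {x : V → R} :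
    laplacian A *ᵥ x = 0 ↔ ∀ i, ∑ j, A i j * (x j - x i) = 0 := by
  simp_rw [← neg_eq_zero (a := laplacian A *ᵥ x), funext_iff, neg_laplacian_mulVec_apply,
    Pi.zero_apply]

theorem laplacian_mulVec_one [CommRing R] (A : Matrix V V R) : laplacian A *ᵥ 1 = 0 := by
  simp [laplacian_mulVec_eq_zero_iff]

theorem exists_one_sub_smul_laplacian_mem_rowStochastic [Field R]
    [LinearOrder R] [IsStrictOrderedRing R] {A : Matrix V V R} (hA : ∀ i j, 0 ≤ A i j) :
    ∃ c > 0, 1 - (c⁻¹ : R) • laplacian A ∈ Matrix.rowStochastic R V := by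
  have hrow (i : V) : 0 ≤ ∑ j, A i j := Finset.sum_nonneg fun j _ => hA i j
  have hc : 0 < 1 + ∑ i, ∑ j, A i j :=
    add_pos_of_pos_of_nonneg one_pos (Finset.sum_nonneg fun i _ => hrow i)
  have hrow_le (i : V) : ∑ j, A i j ≤ 1 + ∑ i, ∑ j, A i j :=
    (Finset.single_le_sum (fun i _ => hrow i) (Finset.mem_univ i)).trans (by simp)
  refine ⟨_, hc, Matrix.mem_rowStochastic.2 ⟨fun i j => ?_, ?_⟩⟩
  · rcases eq_or_ne i j with rfl | hij
    · have hle : ∑ j, A i j - A i i ≤ 1 + ∑ i, ∑ j, A i j :=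
        (sub_le_self _ (hA i i)).trans (hrow_le i)
      simpa [laplacian] using inv_mul_le_one_of_le₀ hle hc.le
    · simpa [laplacian, hij] using mul_nonneg (inv_pos.2 hc).le (hA i j)
  · rw [Matrix.sub_mulVec, Matrix.one_mulVec, Matrix.smul_mulVec, laplacian_mulVec_one, smul_zero,
      sub_zero]

theorem smul_one_sub_smul_laplacian_mulVec_sub [Field R] {c : R} (hc : c ≠ 0)
    (A : Matrix V V R) (v : V → R) :
    c • ((1 - c⁻¹ • laplacian A) *ᵥ v - v) = -(laplacian A *ᵥ v) := by
  rw [Matrix.sub_mulVec, Matrix.one_mulVec, Matrix.smul_mulVec, sub_sub_cancel_left, smul_neg,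
    smul_inv_smul₀ hc]

theorem one_sub_smul_laplacian_mulVec_eq_self_iff [Field R] {c : R} (hc : c ≠ 0)
    (A : Matrix V V R) (v : V → R) : (1 - c⁻¹ • laplacian A) *ᵥ v = v ↔ laplacian A *ᵥ v = 0 := by
  rw [← sub_eq_zero, ← smul_eq_zero_iff_right hc, smul_one_sub_smul_laplacian_mulVec_sub hc,
    neg_eq_zero]

variable {A : Matrix V V ℝ}

theorem exists_tendsto_of_hasDerivAt_neg_laplacian_mulVec (hA : ∀ i j, 0 ≤ A i j) {x : ℝ → V → ℝ}
    (hx : ∀ t, HasDerivAt x (-(laplacian A *ᵥ x t)) t) :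
    ∃ l, laplacian A *ᵥ l = 0 ∧ Tendsto x atTop (𝓝 l) := by
  obtain ⟨c, hc, hM⟩ := exists_one_sub_smul_laplacian_mem_rowStochastic hA
  obtain ⟨l, hl, hlim⟩ := exists_tendsto_of_hasDerivAt_smul_mulVec_sub hM hc
    fun t => (hx t).congr_deriv (smul_one_sub_smul_laplacian_mulVec_sub hc.ne' A (x t)).symm
  exact ⟨l, (one_sub_smul_laplacian_mulVec_eq_self_iff hc.ne' A l).1 hl, hlim⟩

theorem exists_laplacian_mulVec_eq_zero (hA : ∀ i j, 0 ≤ A i j) {U W : Set V}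
    (hUW : Disjoint U W) (hU : ∀ i ∈ U, ∀ j ∉ U, A i j = 0) (hW : ∀ i ∈ W, ∀ j ∉ W, A i j = 0) :
    ∃ y, laplacian A *ᵥ y = 0 ∧ (∀ i ∈ U, y i = 1) ∧ ∀ i ∈ W, y i = 0 := by
  obtain ⟨c, hc, hM⟩ := exists_one_sub_smul_laplacian_mem_rowStochastic hA
  have hclosed {T : Set V} (hT : ∀ i ∈ T, ∀ j ∉ T, A i j = 0) :
      ∀ i ∈ T, ∀ j ∉ T, (1 - c⁻¹ • laplacian A) i j = 0 := fun i hi j hj => by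
    simp [laplacian, ne_of_mem_of_not_mem hi hj, hT i hi j hj]
  obtain ⟨y, hy, hyU, hyW⟩ := exists_mulVec_eq_self hM hUW (hclosed hU) (hclosed hW)
  exact ⟨y, (one_sub_smul_laplacian_mulVec_eq_self_iff hc.ne' A y).1 hy, hyU, hyW⟩

end Laplacian

theorem exists_pos_weights_sum_mul_eq_zero {ι K : Type*} [Field K] [LinearOrder K]
    [IsStrictOrderedRing K] {s : Finset ι} {d : ι → K}
    (h : (∀ j ∈ s, d j = 0) ∨ (∃ j ∈ s, d j < 0) ∧ ∃ k ∈ s, 0 < d k) :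
    ∃ w : ι → K, (∀ j, 0 < w j) ∧ ∑ j ∈ s, w j * d j = 0 := by
  classical
  rcases h with h | ⟨⟨j, hj, hneg⟩, k, hk, hpos⟩
  · exact ⟨1, fun _ => one_pos, Finset.sum_eq_zero fun j hj => by simp [h j hj]⟩
  -- Unit weights, corrected at a single index `m` whose sign allows it.
  obtain ⟨m, hm, hm0, hle⟩ : ∃ m ∈ s, d m ≠ 0 ∧ (∑ j ∈ s, d j) / d m ≤ 0 := by
    rcases le_total 0 (∑ j ∈ s, d j) with hσ | hσ
    · exact ⟨j, hj, hneg.ne, div_nonpos_of_nonneg_of_nonpos hσ hneg.le⟩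
    · exact ⟨k, hk, hpos.ne', div_nonpos_of_nonpos_of_nonneg hσ hpos.le⟩
  refine ⟨1 - Pi.single m ((∑ j ∈ s, d j) / d m), fun j => ?_, ?_⟩
  · have : Pi.single m ((∑ j ∈ s, d j) / d m) ≤ (0 : ι → K) := by simpa using hle
    exact sub_pos.2 ((this j).trans_lt one_pos)
  · simp [sub_mul, Pi.single_apply, Finset.sum_sub_distrib, hm, div_mul_cancel₀ _ hm0]

section Balanced

open scoped Matrix

variable {V : Type*} {E : V → V → Prop} {x y : V → ℝ} {i : V}

/-- `x` takes the value `x i` at all in-neighbours of `i`: then `i` is at rest for all weights. -/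
def IsFlatAt (E : V → V → Prop) (x : V → ℝ) (i : V) : Prop := ∀ j, E j i → x j = x i

/-- Wherever `x` is not flat it takes both a smaller and a larger value at in-neighbours. These are
the vectors that are equilibria of the consensus dynamics for some choice of positive weights. -/
def IsBalanced (E : V → V → Prop) (x : V → ℝ) : Prop :=
  ∀ i, IsFlatAt E x i ∨ (∃ j, E j i ∧ x j < x i) ∧ ∃ k, E k i ∧ x i < x k

/-- The edges entering a node at which `x` is flat. A small multiple of a vector balanced for these
edges can be added to `x` without spoiling its balance. -/
def FlatEdge (E : V → V → Prop) (x : V → ℝ) (a b : V) : Prop := E a b ∧ IsFlatAt E x b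

/-- `A` is a choice of positive weights on the edges of `E`, with `A i j` the weight of the edge
from `j` to `i`. -/
structure IsWeighting (E : V → V → Prop) (A : Matrix V V ℝ) : Prop where
  pos : ∀ i j, E j i → 0 < A i j
  eq_zero : ∀ i j, ¬E j i → A i j = 0

theorem IsWeighting.nonneg {A : Matrix V V ℝ} (hA : IsWeighting E A) (i j : V) : 0 ≤ A i j := by
  by_cases h : E j i
  · exact (hA.pos i j h).le
  · exact (hA.eq_zero i j h).ge

theorem IsBalanced.neg (hx : IsBalanced E x) : IsBalanced E (-x) := fun i => by
  rcases hx i with hflat | ⟨⟨j, hj, hlt⟩, k, hk, hgt⟩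
  · exact .inl fun j hj => congrArg Neg.neg (hflat j hj)
  · exact .inr ⟨⟨k, hk, neg_lt_neg hgt⟩, j, hj, neg_lt_neg hlt⟩

theorem IsBalanced.add_smul (hx : IsBalanced E x) (hy : IsBalanced (FlatEdge E x) y) {ε : ℝ}
    (hε : 0 < ε) (hlt : ∀ i j, x i < x j → x i + ε * y i < x j + ε * y j) :
    IsBalanced E (x + ε • y) := fun i => by
  rcases hx i with hflat | ⟨⟨j, hj, hji⟩, k, hk, hik⟩
  · rcases hy i with hy | ⟨⟨j, ⟨hj, -⟩, hji⟩, k, ⟨hk, -⟩, hik⟩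
    · exact .inl fun j hj => by simp [hflat j hj, hy j ⟨hj, hflat⟩]
    · exact .inr ⟨⟨j, hj, by simpa [hflat j hj, hε] using hji⟩,
        k, hk, by simpa [hflat k hk, hε] using hik⟩
  · exact .inr ⟨⟨j, hj, hlt j i hji⟩, k, hk, hlt i k hik⟩

theorem eq_of_reflTransGen_flatEdge {a b : V} (h : Relation.ReflTransGen (FlatEdge E x) a b) :
    x a = x b := by
  induction h with
  | refl => rfl
  | tail _ hbc ih => exact ih.trans (hbc.2 _ hbc.1)

theorem reflTransGen_levelSet_of_flatEdge {a b : V} {c : ℝ}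
    (h : Relation.ReflTransGen (FlatEdge E x) a b) (hb : x b = c) :
    Relation.ReflTransGen (fun i j => i ∈ {k | x k = c} ∧ j ∈ {k | x k = c} ∧ E i j) a b := by
  induction h with
  | refl => exact .refl
  | tail _ hbd ih =>
    have hb' := (hbd.2 _ hbd.1).trans hb
    exact (ih hb').tail ⟨hb', hb, hbd.1⟩

section Weights

variable [Fintype V] [DecidableEq V]

theorem IsWeighting.exists_lt {A : Matrix V V ℝ} (hA : IsWeighting E A)
    (hx : laplacian A *ᵥ x = 0) (hi : ¬IsFlatAt E x i) : ∃ k, E k i ∧ x i < x k := by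
  obtain ⟨j, hj, hne⟩ : ∃ j, E j i ∧ x j ≠ x i := by simpa [IsFlatAt] using hi
  obtain ⟨k, -, hk⟩ := Finset.exists_pos_of_sum_zero_of_exists_nonzero _
    (laplacian_mulVec_eq_zero_iff.1 hx i)
    ⟨j, Finset.mem_univ j, mul_ne_zero (hA.pos i j hj).ne' (sub_ne_zero.2 hne)⟩
  have hedge : E k i := by
    by_contra h
    simp [hA.eq_zero i k h] at hk
  exact ⟨k, hedge, sub_pos.1 (pos_of_mul_pos_right hk (hA.nonneg i k))⟩

theorem IsWeighting.isBalanced {A : Matrix V V ℝ} (hA : IsWeighting E A)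
    (hx : laplacian A *ᵥ x = 0) : IsBalanced E x := fun i => by
  by_cases hi : IsFlatAt E x i
  · exact .inl hi
  have hneg : ∃ j, E j i ∧ (-x) i < (-x) j := by
    refine hA.exists_lt (by rw [Matrix.mulVec_neg, hx, neg_zero]) ?_
    simpa [IsFlatAt] using hi
  exact .inr ⟨by simpa using hneg, hA.exists_lt hx hi⟩

theorem IsBalanced.exists_isWeighting (hx : IsBalanced E x) :
    ∃ A, IsWeighting E A ∧ laplacian A *ᵥ x = 0 := by
  classical
  have hweights (i : V) : ∃ w : V → ℝ, (∀ j, 0 < w j) ∧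
      ∑ j with E j i, w j * (x j - x i) = 0 :=
    exists_pos_weights_sum_mul_eq_zero (by simpa [IsFlatAt, sub_eq_zero] using hx i)
  choose w hpos hsum using hweights
  refine ⟨.of fun i j => if E j i then w i j else 0, ⟨?_, ?_⟩, laplacian_mulVec_eq_zero_iff.2 ?_⟩
  · intro i j h
    simpa [h] using hpos i j
  · intro i j h
    simp [h]
  · intro i
    simpa [Finset.sum_filter] using hsum i

end Weights

section MaximumPrinciple

/-- `r` is a root of the subgraph induced on `S`. -/
def IsRoot (E : V → V → Prop) (S : Set V) (r : V) : Prop :=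
  r ∈ S ∧ ∀ j ∈ S, Relation.ReflTransGen (fun a b => a ∈ S ∧ b ∈ S ∧ E a b) r j

/-- `r` is a root of the subgraph induced on `S`, and edges enter `S` from outside at `r` only, if
at all. -/
def IsSoleEntry (E : V → V → Prop) (S : Set V) (r : V) : Prop :=
  IsRoot E S r ∧ ∀ i ∈ S, i ≠ r → ∀ j, E j i → j ∈ S

variable {S : Set V} {r : V}

theorem satC1C2_iff_exists_isSoleEntry : SatC1C2 E S ↔ ∃ r, IsSoleEntry E S r := by
  constructor
  · rintro ⟨⟨r, hr, hroot⟩, hclosed | ⟨q, hq, hqroot, -, hentry⟩⟩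
    · exact ⟨r, ⟨hr, hroot⟩, fun i hi _ j hj => by_contra fun hjS => hclosed i hi j hjS hj⟩
    · exact ⟨q, ⟨hq, hqroot⟩, fun i hi hne j hj =>
        by_contra fun hjS => hne (hentry i hi ⟨j, hjS, hj⟩)⟩
  · rintro ⟨r, ⟨hr, hroot⟩, hentry⟩
    have honly : ∀ i ∈ S, (∃ j ∉ S, E j i) → i = r := fun i hi ⟨j, hjS, hj⟩ =>
      by_contra fun hne => hjS (hentry i hi hne j hj)
    refine ⟨⟨r, hr, hroot⟩, ?_⟩
    by_cases hr' : ∃ j ∉ S, E j r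
    · exact .inr ⟨r, hr, hroot, hr', honly⟩
    · exact .inl fun i hi j hjS hj => hr' (honly i hi ⟨j, hjS, hj⟩ ▸ ⟨j, hjS, hj⟩)

variable [Finite V]

theorem IsBalanced.le_of_isSoleEntry (hx : IsBalanced E x) (hS : IsSoleEntry E S r)
    (hi : i ∈ S) : x i ≤ x r := by
  obtain ⟨m, hm, hmax⟩ := Set.exists_max_image S x S.toFinite ⟨i, hi⟩
  -- The maximum is attained at `m` and spreads to in-neighbours all the way back to `r`.
  suffices ∀ c, Relation.ReflTransGen (fun a b => a ∈ S ∧ b ∈ S ∧ E a b) r c →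
      x c = x m → x r = x m from (hmax i hi).trans (this m (hS.1.2 m hm) rfl).ge
  intro c hrc hc
  induction hrc with
  | refl => exact hc
  | @tail b c _ hbc ih =>
    by_cases hcr : c = r
    · exact hcr ▸ hc
    rcases hx c with hflat | ⟨-, k, hk, hlt⟩
    · exact ih ((hflat b hbc.2.2).trans hc)
    · exact absurd (hmax k (hS.2 c hbc.2.1 hcr k hk)) (hc ▸ hlt).not_ge

theorem IsBalanced.eq_of_isSoleEntry (hx : IsBalanced E x) (hS : IsSoleEntry E S r)
    (hi : i ∈ S) : x i = x r :=
  (hx.le_of_isSoleEntry hS hi).antisymm (neg_le_neg_iff.1 (hx.neg.le_of_isSoleEntry hS hi))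

end MaximumPrinciple

section Finest

/-- `x` is a balanced vector whose partition of the nodes into level sets admits no strict
refinement by that of another balanced vector. -/
def IsFinestBalanced (E : V → V → Prop) (x : V → ℝ) : Prop :=
  MinimalFor (IsBalanced E) (fun x => {p : V × V | x p.1 = x p.2}) x

variable [Finite V]

theorem exists_isBalanced_ne {a b : V}
    (h : ∀ r, Relation.ReflTransGen E r a → ¬Relation.ReflTransGen E r b) :
    ∃ y, IsBalanced E y ∧ y a ≠ y b := by
  classical
  cases nonempty_fintype V
  let A : Matrix V V ℝ := .of fun i j => if E j i then 1 else 0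
  have hA : IsWeighting E A := ⟨fun i j hij => by simp [A, hij], fun i j hij => by simp [A, hij]⟩
  have hclosed (c : V) : ∀ i ∈ {i | Relation.ReflTransGen E i c},
      ∀ j ∉ {i | Relation.ReflTransGen E i c}, A i j = 0 :=
    fun i hi j hj => hA.eq_zero i j fun hji => hj (.head hji hi)
  obtain ⟨y, hy, hya, hyb⟩ := exists_laplacian_mulVec_eq_zero hA.nonneg
    (Set.disjoint_left.2 h) (hclosed a) (hclosed b)
  exact ⟨y, hA.isBalanced hy, by simp [hya a .refl, hyb b .refl]⟩

theorem exists_pos_forall_add_mul_lt_add_mul (x y : V → ℝ) :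
    ∃ ε > 0, ∀ i j, x i < x j → x i + ε * y i < x j + ε * y j := by
  have hnear : ∀ᶠ ε in 𝓝 (0 : ℝ), ∀ i j, x i < x j → x i + ε * y i < x j + ε * y j := by
    refine eventually_all.2 fun i => eventually_all.2 fun j => ?_
    by_cases hij : x i < x j
    · have hlim (k : V) : Tendsto (fun ε => x k + ε * y k) (𝓝 0) (𝓝 (x k)) :=
        Continuous.tendsto' (by fun_prop) _ _ (by simp)
      filter_upwards [(hlim i).eventually_lt (hlim j) hij] with ε hε _ using hε
    · simp [hij]
  obtain ⟨ε, hε, hlt⟩ :=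
    (eventually_mem_nhdsWithin.and (hnear.filter_mono (nhdsWithin_le_nhds (s := Set.Ioi 0)))).exists
  exact ⟨ε, hε, hlt⟩

theorem exists_isFinestBalanced (E : V → V → Prop) : ∃ x, IsFinestBalanced E x :=
  exists_minimalFor_of_wellFoundedLT _ _ ⟨0, fun _ => .inl fun _ _ => rfl⟩

theorem IsFinestBalanced.exists_reflTransGen_flatEdge (hx : IsFinestBalanced E x) {a b : V}
    (hab : x a = x b) : ∃ r, Relation.ReflTransGen (FlatEdge E x) r a ∧
      Relation.ReflTransGen (FlatEdge E x) r b := by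
  by_contra! h
  obtain ⟨y, hy, hne⟩ := exists_isBalanced_ne h
  obtain ⟨ε, hε, hlt⟩ := exists_pos_forall_add_mul_lt_add_mul x y
  have hfiner : {p : V × V | (x + ε • y) p.1 = (x + ε • y) p.2} ⊆ {p | x p.1 = x p.2} :=
    fun p hp => by
      by_contra hxp
      rcases lt_or_gt_of_ne hxp with h | h
      · exact (hlt _ _ h).ne hp
      · exact (hlt _ _ h).ne' hp
  have hcoarser : {p : V × V | x p.1 = x p.2} ⊆ {p | (x + ε • y) p.1 = (x + ε • y) p.2} :=
    hx.2 (hx.1.add_smul hy hε hlt) hfiner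
  have heq : (x + ε • y) a = (x + ε • y) b := hcoarser (show (a, b) ∈ _ from hab)
  exact hne (by simpa [hab, hε.ne'] using heq)

theorem IsFinestBalanced.exists_isSoleEntry_levelSet (hx : IsFinestBalanced E x) (a : V) :
    ∃ r, IsSoleEntry E {i | x i = x a} r := by
  have : Nonempty {i | x i = x a} := ⟨a, rfl⟩
  have hdirected : Directed (Function.swap (Relation.ReflTransGen (FlatEdge E x)))
      (Subtype.val : {i | x i = x a} → V) := fun ⟨i, hi⟩ ⟨j, hj⟩ => by
    obtain ⟨q, hqi, hqj⟩ := hx.exists_reflTransGen_flatEdge (hi.trans (Eq.symm hj))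
    exact ⟨⟨q, (eq_of_reflTransGen_flatEdge hqi).trans hi⟩, hqi, hqj⟩
  obtain ⟨⟨r, hr⟩, hroot⟩ := hdirected.finite_le id
  refine ⟨r, ⟨hr, fun i hi => reflTransGen_levelSet_of_flatEdge (hroot ⟨i, hi⟩) hi⟩,
    fun i hi hne j hj => ?_⟩
  rcases (hroot ⟨i, hi⟩).cases_tail with h | ⟨k, -, hki⟩
  · exact absurd h hne
  · exact (hki.2 j hj).trans hi

end Finest

end Balanced

section Clusters

variable {V : Type*} [Fintype V] {E : V → V → Prop} {S : Set V}

theorem ConvergesTogether.eq_of_isBalanced (hS : ConvergesTogether E S) {x : V → ℝ}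
    (hx : IsBalanced E x) {i j : V} (hi : i ∈ S) (hj : j ∈ S) : x i = x j := by
  classical
  obtain ⟨A, hA, hxA⟩ := hx.exists_isWeighting
  obtain ⟨c, hc⟩ := hS A hA.pos hA.eq_zero (fun _ => x) fun i t => by
    rw [laplacian_mulVec_eq_zero_iff.1 hxA i]
    exact hasDerivAt_const t (x i)
  rw [tendsto_nhds_unique tendsto_const_nhds (hc i hi),
    tendsto_nhds_unique tendsto_const_nhds (hc j hj)]

theorem ConvergesTogether.exists_satC1C2 (hS : ConvergesTogether E S) (hne : S.Nonempty) :
    ∃ T, S ⊆ T ∧ SatC1C2 E T := by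
  obtain ⟨a, ha⟩ := hne
  obtain ⟨x, hx⟩ := exists_isFinestBalanced E
  exact ⟨{i | x i = x a}, fun i hi => hS.eq_of_isBalanced hx.1 hi ha,
    satC1C2_iff_exists_isSoleEntry.2 (hx.exists_isSoleEntry_levelSet a)⟩

theorem SatC1C2.convergesTogether (hS : SatC1C2 E S) : ConvergesTogether E S := by
  classical
  intro A hpos hzero x hx
  have hA : IsWeighting E A := ⟨hpos, hzero⟩
  obtain ⟨r, hr⟩ := satC1C2_iff_exists_isSoleEntry.1 hS
  obtain ⟨l, hl, hlim⟩ := exists_tendsto_of_hasDerivAt_neg_laplacian_mulVec hA.nonneg fun t =>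
    hasDerivAt_pi.2 fun i => (hx i t).congr_deriv (neg_laplacian_mulVec_apply A (x t) i).symm
  refine ⟨l r, fun i hi => ?_⟩
  rw [← (hA.isBalanced hl).eq_of_isSoleEntry hr hi]
  exact tendsto_pi_nhds.1 hlim i

end Clusters

/-- A nonempty `S` is a topological cluster (a maximal set of nodes converging to
an identical value for all positive edge weights and initial conditions) iff `S`
is a maximal set satisfying (C1) and (C2). -/
theorem stmt12 {V : Type*} [Fintype V] (E : V → V → Prop) (S : Set V)
    (hS : S.Nonempty) :
    (ConvergesTogether E S ∧
        ∀ S' : Set V, S ⊆ S' → ConvergesTogether E S' → S' = S) ↔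
      (SatC1C2 E S ∧ ∀ S' : Set V, S ⊆ S' → SatC1C2 E S' → S' = S) := by
  constructor
  · rintro ⟨hconv, hmax⟩
    obtain ⟨T, hST, hT⟩ := hconv.exists_satC1C2 hS
    have hTS := hmax T hST hT.convergesTogether
    exact ⟨hTS ▸ hT, fun S' hSS' hS' => hmax S' hSS' hS'.convergesTogether⟩
  · rintro ⟨hsat, hmax⟩
    refine ⟨hsat.convergesTogether, fun S' hSS' hS' => ?_⟩
    obtain ⟨T, hST, hT⟩ := hS'.exists_satC1C2 (hS.mono hSS')
    have hTS := hmax T (hSS'.trans hST) hT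
    exact (hST.trans hTS.le).antisymm hSS'
end

section
/- Under the dynamics ẋ = -Lx over any weighted directed graph with positive edge weights, the state x(t) converges to a finite limit as t → ∞ for every initial condition (i.e., the matrix exponential e^{-Lt} converges as t → ∞). -/
open Filter Topology

open Set

/-!
Write the system as `ẋ = -L x`. For large `κ` the operator `κ - L` has norm at most `κ` for the sup
norm, because its matrix is nonnegative with row sums `κ`. The rest follows from this bound.

It makes `‖x‖` nonincreasing. The velocity is `-v` with `v = L x`, which solves the same equation,
so `‖v‖` decreases to some `d ≥ 0`. Late in time `‖v‖` is almost constant on a window of any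
prescribed length `S`. A functional `ℓ` of norm at most one that attains `‖v‖` at the end of the
window satisfies `ℓ v ≥ d - o(1)` throughout the window, because `m - ℓ v` can decay at most at rate
`κ` while `‖v‖ ≤ m`. Hence `x` travels a distance of at least about `S d`; as `x` is bounded and `S`
is arbitrary, `d = 0`.

So every cluster point `c` of `x` is an equilibrium. As `x - c` is again a solution, `‖x - c‖` is
nonincreasing, and therefore `x` converges to `c`.
-/

theorem exists_tendsto_atTop_of_antitoneOn_Ici {f : ℝ → ℝ} {a : ℝ} (hf : AntitoneOn f (Ici a))
    (hbdd : BddBelow (f '' Ici a)) : ∃ d, Tendsto f atTop (𝓝 d) := by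
  have hanti : Antitone fun t => f (max t a) := fun s t hst =>
    hf (le_max_right s a) (le_max_right t a) (max_le_max_right a hst)
  have hbdd' : BddBelow (range fun t => f (max t a)) :=
    hbdd.mono (range_subset_iff.2 fun t => mem_image_of_mem f (le_max_right t a))
  refine ⟨_, (tendsto_atTop_ciInf hanti hbdd').congr' ?_⟩
  filter_upwards [eventually_ge_atTop a] with t ht
  rw [max_eq_left ht]

theorem hasDerivAt_exp_const_mul (κ t : ℝ) :
    HasDerivAt (fun s => Real.exp (κ * s)) (Real.exp (κ * t) * κ) t := by
  simpa only [id, mul_one] using ((hasDerivAt_id t).const_mul κ).exp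

section Orbit

variable {E : Type*} [NormedAddCommGroup E] [NormedSpace ℝ E]

theorem norm_exp_smul (r : ℝ) (y : E) : ‖Real.exp r • y‖ = Real.exp r * ‖y‖ := by
  rw [norm_smul, Real.norm_of_nonneg (Real.exp_nonneg r)]

theorem norm_exp_smul_apply_le {P : E →L[ℝ] E} {κ : ℝ} (hP : ‖P‖ ≤ κ) (r : ℝ) (y : E) :
    ‖Real.exp r • P y‖ ≤ Real.exp r * (κ * ‖y‖) := by
  rw [norm_exp_smul]
  gcongr
  exact P.le_of_opNorm_le hP y

/-- The trajectories `x t = e^{-tL} (x 0)`, `t ≥ 0`, described by their equation `ẋ = -L x`.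
Values of `x` at negative times are irrelevant. -/
def IsForwardOrbit (L : E →L[ℝ] E) (x : ℝ → E) : Prop :=
  IsIntegralCurveOn x (fun _ y => -L y) (Ici 0)

namespace IsForwardOrbit

variable {L : E →L[ℝ] E} {x : ℝ → E} {κ a b : ℝ}

theorem generator_comp (hx : IsForwardOrbit L x) : IsForwardOrbit L fun t => L (x t) := fun t ht =>
  (L.hasFDerivAt.comp_hasDerivWithinAt t (hx t ht)).congr_deriv (map_neg L _)

theorem sub_const (hx : IsForwardOrbit L x) {c : E} (hc : L c = 0) :
    IsForwardOrbit L fun t => x t - c := fun t ht => by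
  simpa only [map_sub, hc, sub_zero] using (hx t ht).sub_const c

theorem hasDerivWithinAt_exp_smul (hx : IsForwardOrbit L x) (κ : ℝ) {t : ℝ} (ht : 0 ≤ t) :
    HasDerivWithinAt (fun s => Real.exp (κ * s) • x s)
      (Real.exp (κ * t) • (κ • (1 : E →L[ℝ] E) - L) (x t)) (Ici 0) t := by
  refine ((hasDerivAt_exp_const_mul κ t).hasDerivWithinAt.smul (hx t ht)).congr_deriv ?_
  simp only [sub_apply, smul_apply, one_apply_eq_self]
  module

theorem antitoneOn_norm (hx : IsForwardOrbit L x) (hL : ‖κ • (1 : E →L[ℝ] E) - L‖ ≤ κ) :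
    AntitoneOn (fun t => ‖x t‖) (Ici 0) := by
  intro a ha b _ hab
  have hd {t : ℝ} (ht : a ≤ t) := hx.hasDerivWithinAt_exp_smul κ (ha.trans ht)
  have hderiv_le (t : ℝ) : ‖Real.exp (κ * t) • (κ • (1 : E →L[ℝ] E) - L) (x t)‖ ≤
      κ * ‖Real.exp (κ * t) • x t‖ + 0 := by
    rw [norm_exp_smul _ (x t), add_zero, mul_left_comm]
    exact norm_exp_smul_apply_le hL (κ * t) (x t)
  have hgrowth : ‖Real.exp (κ * b) • x b‖ ≤
      gronwallBound ‖Real.exp (κ * a) • x a‖ κ 0 (b - a) :=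
    norm_le_gronwallBound_of_norm_deriv_right_le
      (fun t ht => (hd ht.1).continuousWithinAt.mono fun s hs => le_trans ha hs.1)
      (fun t ht => (hd ht.1).mono (Ici_subset_Ici.2 (ha.trans ht.1))) le_rfl
      (fun t _ => hderiv_le t) b (right_mem_Icc.2 hab)
  refine le_of_mul_le_mul_left ?_ (Real.exp_pos (κ * b))
  calc Real.exp (κ * b) * ‖x b‖ ≤ Real.exp (κ * a) * ‖x a‖ * Real.exp (κ * (b - a)) := by
        rwa [gronwallBound_ε0, norm_exp_smul, norm_exp_smul] at hgrowth
    _ = Real.exp (κ * b) * ‖x a‖ := by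
        rw [mul_right_comm, ← Real.exp_add, ← mul_add, add_sub_cancel]

theorem norm_exp_smul_sub_exp_smul_le (hx : IsForwardOrbit L x)
    (hL : ‖κ • (1 : E →L[ℝ] E) - L‖ ≤ κ) {m : ℝ} (ha : 0 ≤ a) (hab : a ≤ b) (hm : ‖x a‖ ≤ m) :
    ‖Real.exp (κ * b) • x b - Real.exp (κ * a) • x a‖ ≤
      (Real.exp (κ * b) - Real.exp (κ * a)) * m := by
  have hd {t : ℝ} (ht : a ≤ t) :=
    (hx.hasDerivWithinAt_exp_smul κ (ha.trans ht)).sub_const (Real.exp (κ * a) • x a)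
  refine image_norm_le_of_norm_deriv_right_le_deriv_boundary
    (B := fun t => (Real.exp (κ * t) - Real.exp (κ * a)) * m)
    (fun t ht => (hd ht.1).continuousWithinAt.mono fun s hs => le_trans ha hs.1)
    (fun t ht => (hd ht.1).mono (Ici_subset_Ici.2 (ha.trans ht.1)))
    (by simp only [sub_self, norm_zero, zero_mul, le_refl])
    (fun t => ((hasDerivAt_exp_const_mul κ t).sub_const _).mul_const m)
    (fun t ht => ?_) (right_mem_Icc.2 hab)
  calc ‖Real.exp (κ * t) • (κ • (1 : E →L[ℝ] E) - L) (x t)‖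
      ≤ Real.exp (κ * t) * (κ * ‖x t‖) := norm_exp_smul_apply_le hL (κ * t) (x t)
    _ ≤ Real.exp (κ * t) * (κ * m) := by
      have hκ : 0 ≤ κ := (norm_nonneg _).trans hL
      gcongr
      exact (hx.antitoneOn_norm hL ha (ha.trans ht.1) ht.1).trans hm
    _ = Real.exp (κ * t) * κ * m := (mul_assoc _ _ _).symm

theorem sub_dual_le_exp_mul_sub_dual (hx : IsForwardOrbit L x) (hL : ‖κ • (1 : E →L[ℝ] E) - L‖ ≤ κ)
    {ℓ : StrongDual ℝ E} (hℓ : ‖ℓ‖ ≤ 1) {m : ℝ} (ha : 0 ≤ a) (hab : a ≤ b) (hm : ‖x a‖ ≤ m) :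
    m - ℓ (x a) ≤ Real.exp (κ * (b - a)) * (m - ℓ (x b)) := by
  have hincr : Real.exp (κ * b) * ℓ (x b) - Real.exp (κ * a) * ℓ (x a) ≤
      (Real.exp (κ * b) - Real.exp (κ * a)) * m :=
    calc Real.exp (κ * b) * ℓ (x b) - Real.exp (κ * a) * ℓ (x a)
        = ℓ (Real.exp (κ * b) • x b - Real.exp (κ * a) • x a) := by
          simp only [map_sub, map_smul, smul_eq_mul]
      _ ≤ 1 * ‖Real.exp (κ * b) • x b - Real.exp (κ * a) • x a‖ :=
          (Real.le_norm_self _).trans (ℓ.le_of_opNorm_le hℓ _)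
      _ ≤ (Real.exp (κ * b) - Real.exp (κ * a)) * m := by
          rw [one_mul]
          exact hx.norm_exp_smul_sub_exp_smul_le hL ha hab hm
  refine le_of_mul_le_mul_left ?_ (Real.exp_pos (κ * a))
  rw [← mul_assoc, ← Real.exp_add, ← mul_add, add_sub_cancel]
  linarith

theorem mul_sub_le_norm_sub_of_le_dual (hx : IsForwardOrbit L x) {ℓ : StrongDual ℝ E}
    (hℓ : ‖ℓ‖ ≤ 1) {r : ℝ} (ha : 0 ≤ a) (hab : a ≤ b) (hr : ∀ t ∈ Ico a b, r ≤ ℓ (L (x t))) :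
    r * (b - a) ≤ ‖x a - x b‖ := by
  have hd {t : ℝ} (ht : a ≤ t) : HasDerivWithinAt (fun s => ℓ (x s)) (ℓ (-L (x t))) (Ici 0) t :=
    ℓ.hasFDerivAt.comp_hasDerivWithinAt t (hx t (ha.trans ht))
  have hB (t : ℝ) : HasDerivAt (fun s => ℓ (x a) - r * (s - a)) (-r) t := by
    simpa only [id, mul_one] using (((hasDerivAt_id t).sub_const a).const_mul r).const_sub (ℓ (x a))
  have hdrop : ℓ (x b) ≤ ℓ (x a) - r * (b - a) :=
    image_le_of_deriv_right_le_deriv_boundary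
      (fun t ht => (hd ht.1).continuousWithinAt.mono fun s hs => le_trans ha hs.1)
      (fun t ht => (hd ht.1).mono (Ici_subset_Ici.2 (ha.trans ht.1)))
      (by simp only [sub_self, mul_zero, sub_zero, le_refl])
      (fun t _ => (hB t).continuousAt.continuousWithinAt) (fun t _ => (hB t).hasDerivWithinAt)
      (fun t ht => by simpa only [map_neg, neg_le_neg_iff] using hr t ht) (right_mem_Icc.2 hab)
  calc r * (b - a) ≤ ℓ (x a - x b) := by rw [map_sub]; linarith
    _ ≤ 1 * ‖x a - x b‖ := (Real.le_norm_self _).trans (ℓ.le_of_opNorm_le hℓ _)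
    _ = ‖x a - x b‖ := one_mul _

theorem norm_generator_sub_mul_le_norm_sub (hx : IsForwardOrbit L x)
    (hL : ‖κ • (1 : E →L[ℝ] E) - L‖ ≤ κ) (ha : 0 ≤ a) (hab : a ≤ b) :
    (‖L (x a)‖ - Real.exp (κ * (b - a)) * (‖L (x a)‖ - ‖L (x b)‖)) * (b - a) ≤ ‖x a - x b‖ := by
  obtain ⟨ℓ, hℓ, hℓb⟩ := exists_dual_vector'' ℝ (L (x b))
  have hℓb : ℓ (L (x b)) = ‖L (x b)‖ := hℓb
  refine hx.mul_sub_le_norm_sub_of_le_dual hℓ ha hab fun t ht => ?_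
  have hanti := hx.generator_comp.antitoneOn_norm hL
  have h0t : 0 ≤ t := ha.trans ht.1
  have hκ : 0 ≤ κ := (norm_nonneg _).trans hL
  have hback : ‖L (x a)‖ - ℓ (L (x t)) ≤ Real.exp (κ * (b - a)) * (‖L (x a)‖ - ‖L (x b)‖) :=
    calc ‖L (x a)‖ - ℓ (L (x t))
        ≤ Real.exp (κ * (b - t)) * (‖L (x a)‖ - ℓ (L (x b))) :=
          hx.generator_comp.sub_dual_le_exp_mul_sub_dual hL hℓ h0t ht.2.le (hanti ha h0t ht.1)
      _ ≤ Real.exp (κ * (b - a)) * (‖L (x a)‖ - ‖L (x b)‖) := by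
          rw [hℓb]
          gcongr
          · exact sub_nonneg.2 (hanti ha (ha.trans hab) hab)
          · exact ht.1
  linarith

theorem exists_tendsto_norm (hx : IsForwardOrbit L x) (hL : ‖κ • (1 : E →L[ℝ] E) - L‖ ≤ κ) :
    ∃ d, Tendsto (fun t => ‖x t‖) atTop (𝓝 d) :=
  exists_tendsto_atTop_of_antitoneOn_Ici (hx.antitoneOn_norm hL)
    ⟨0, forall_mem_image.2 fun _ _ => norm_nonneg _⟩

theorem tendsto_norm_generator_comp (hx : IsForwardOrbit L x) (hL : ‖κ • (1 : E →L[ℝ] E) - L‖ ≤ κ) :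
    Tendsto (fun t => ‖L (x t)‖) atTop (𝓝 0) := by
  obtain ⟨d, hd⟩ := hx.generator_comp.exists_tendsto_norm hL
  have hbound {t : ℝ} (ht : 0 ≤ t) : ‖x t‖ ≤ ‖x 0‖ := hx.antitoneOn_norm hL self_mem_Ici ht ht
  have hwindow {S : ℝ} (hS : 0 ≤ S) : d * S ≤ 2 * ‖x 0‖ := by
    have hdS : Tendsto (fun t => ‖L (x (t + S))‖) atTop (𝓝 d) :=
      hd.comp (tendsto_atTop_add_const_right _ S tendsto_id)
    have hlim : Tendsto
        (fun t => (‖L (x t)‖ - Real.exp (κ * S) * (‖L (x t)‖ - ‖L (x (t + S))‖)) * S)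
        atTop (𝓝 (d * S)) := by
      simpa only [sub_self, mul_zero, sub_zero] using
        (hd.sub ((hd.sub hdS).const_mul (Real.exp (κ * S)))).mul_const S
    refine le_of_tendsto hlim ?_
    filter_upwards [eventually_ge_atTop 0] with t ht
    have htravel := hx.norm_generator_sub_mul_le_norm_sub hL ht (le_add_of_nonneg_right hS)
    rw [add_sub_cancel_left] at htravel
    linarith [norm_sub_le (x t) (x (t + S)), hbound ht, hbound (add_nonneg ht hS)]
  have hd_nonneg : 0 ≤ d := ge_of_tendsto' hd fun t => norm_nonneg _
  have hd_zero : d = 0 := by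
    by_contra hne
    have hlong := hwindow (S := (2 * ‖x 0‖ + 1) / d) (by positivity)
    rw [mul_div_cancel₀ _ hne] at hlong
    linarith
  rwa [← hd_zero]

theorem exists_tendsto [FiniteDimensional ℝ E] (hx : IsForwardOrbit L x)
    (hL : ‖κ • (1 : E →L[ℝ] E) - L‖ ≤ κ) : ∃ c, Tendsto x atTop (𝓝 c) := by
  have hbounded : ∃ᶠ t in atTop, x t ∈ Metric.closedBall 0 ‖x 0‖ := by
    refine ((eventually_ge_atTop 0).mono fun t ht => ?_).frequently
    exact mem_closedBall_zero_iff.2 (hx.antitoneOn_norm hL self_mem_Ici ht ht)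
  obtain ⟨c, -, hcluster⟩ :=
    (isCompact_closedBall (0 : E) ‖x 0‖).exists_mapClusterPt_of_frequently hbounded
  obtain ⟨U, hU, hUc⟩ := mapClusterPt_iff_ultrafilter.1 hcluster
  have hc : L c = 0 := tendsto_nhds_unique ((L.continuous.tendsto c).comp hUc)
    ((tendsto_zero_iff_norm_tendsto_zero.2 (hx.tendsto_norm_generator_comp hL)).mono_left hU)
  obtain ⟨d, hd⟩ := (hx.sub_const hc).exists_tendsto_norm hL
  have hd_zero : d = 0 :=
    tendsto_nhds_unique (hd.mono_left hU) (tendsto_iff_norm_sub_tendsto_zero.1 hUc)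
  exact ⟨c, tendsto_iff_norm_sub_tendsto_zero.2 (hd_zero ▸ hd)⟩

end IsForwardOrbit

end Orbit

section Laplacian

variable {V F : Type*} [Fintype V] [NormedAddCommGroup F] [NormedSpace ℝ F]

variable (F) in
/-- The Laplacian `L` of the directed graph with weight `A i j` on the edge `(j, i)`, acting on
vertex states with values in `F`. The space `V → F` carries the sup norm. -/
def directedLaplacian (A : Matrix V V ℝ) : (V → F) →L[ℝ] (V → F) :=
  ContinuousLinearMap.pi fun i => ∑ j, A i j •
    (ContinuousLinearMap.proj (R := ℝ) (φ := fun _ => F) i - ContinuousLinearMap.proj j)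

theorem directedLaplacian_apply (A : Matrix V V ℝ) (y : V → F) (i : V) :
    directedLaplacian F A y i = ∑ j, A i j • (y i - y j) := by
  simp [directedLaplacian]

theorem neg_directedLaplacian_apply (A : Matrix V V ℝ) (y : V → F) (i : V) :
    (-directedLaplacian F A y) i = ∑ j, A i j • (y j - y i) := by
  simp only [Pi.neg_apply, directedLaplacian_apply, ← Finset.sum_neg_distrib, ← smul_neg, neg_sub]

theorem norm_smul_one_sub_directedLaplacian_le {A : Matrix V V ℝ} (hA : ∀ i j, 0 ≤ A i j) {κ : ℝ}
    (hκ₀ : 0 ≤ κ) (hκ : ∀ i, ∑ j, A i j ≤ κ) :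
    ‖κ • (1 : (V → F) →L[ℝ] (V → F)) - directedLaplacian F A‖ ≤ κ := by
  refine ContinuousLinearMap.opNorm_le_bound _ hκ₀ fun y => ?_
  refine (pi_norm_le_iff_of_nonneg (by positivity)).2 fun i => ?_
  have hexpand : (κ • (1 : (V → F) →L[ℝ] (V → F)) - directedLaplacian F A) y i =
      (κ - ∑ j, A i j) • y i + ∑ j, A i j • y j := by
    simp only [sub_apply, smul_apply, one_apply_eq_self, Pi.sub_apply, Pi.smul_apply,
      directedLaplacian_apply, smul_sub, Finset.sum_sub_distrib, ← Finset.sum_smul]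
    module
  calc ‖(κ • (1 : (V → F) →L[ℝ] (V → F)) - directedLaplacian F A) y i‖
      ≤ ‖(κ - ∑ j, A i j) • y i‖ + ∑ j, ‖A i j • y j‖ := by
        rw [hexpand]
        exact (norm_add_le _ _).trans (add_le_add_right (norm_sum_le _ _) _)
    _ = (κ - ∑ j, A i j) * ‖y i‖ + ∑ j, A i j * ‖y j‖ := by
        simp only [norm_smul, Real.norm_of_nonneg (hA i _),
          Real.norm_of_nonneg (sub_nonneg.2 (hκ i))]
    _ ≤ (κ - ∑ j, A i j) * ‖y‖ + ∑ j, A i j * ‖y‖ := by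
        gcongr with j
        · exact sub_nonneg.2 (hκ i)
        · exact norm_le_pi_norm y i
        · exact hA i j
        · exact norm_le_pi_norm y j
    _ = κ * ‖y‖ := by rw [← Finset.sum_mul]; ring

theorem stmt19_general [FiniteDimensional ℝ F] (A : Matrix V V ℝ) (hA : ∀ i j, 0 ≤ A i j)
    (x : ℝ → V → F)
    (hx : ∀ i, ∀ t ∈ Ici (0 : ℝ),
      HasDerivWithinAt (fun s => x s i) (∑ j, A i j • (x t j - x t i)) (Ici 0) t) :
    ∃ c : V → F, ∀ i, Tendsto (fun t => x t i) atTop (𝓝 (c i)) := by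
  have horbit : IsForwardOrbit (directedLaplacian F A) x := fun t ht =>
    hasDerivWithinAt_pi.2 fun i => (hx i t ht).congr_deriv (neg_directedLaplacian_apply A _ i).symm
  have hrow (i : V) : ∑ j, A i j ≤ ∑ i, ∑ j, A i j := Finset.single_le_sum
    (f := fun i => ∑ j, A i j) (fun i _ => Finset.sum_nonneg fun j _ => hA i j) (Finset.mem_univ i)
  have hκ₀ : 0 ≤ ∑ i, ∑ j, A i j := Finset.sum_nonneg fun i _ => Finset.sum_nonneg fun j _ => hA i j
  obtain ⟨c, hc⟩ := horbit.exists_tendsto (norm_smul_one_sub_directedLaplacian_le hA hκ₀ hrow)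
  exact ⟨c, tendsto_pi_nhds.1 hc⟩

end Laplacian

/-- Under the dynamics `ẋᵢ = Σⱼ aᵢⱼ (xⱼ - xᵢ)` over any weighted directed graph
with nonnegative weights (positive exactly on edges), every solution (every
initial condition) converges to a finite limit as `t → ∞`. -/
theorem stmt19 {V : Type*} [Fintype V] (A : Matrix V V ℝ)
    (hA : ∀ i j, 0 ≤ A i j)
    (x : ℝ → V → ℝ)
    (hx : ∀ (i : V) (t : ℝ),
      HasDerivAt (fun s => x s i) (∑ j, A i j * (x t j - x t i)) t) :
    ∃ c : V → ℝ, ∀ i : V, Tendsto (fun t => x t i) atTop (𝓝 (c i)) :=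
  stmt19_general A hA x fun i t _ => (hx i t).hasDerivWithinAt
end
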